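/- Core modular estimate of the variable-exponent Franke embedding: Let n ∈ ℕ, ε ∈ (0,1), r > 1, and let p : ℝⁿ → (0,∞) satisfy 0 < inf p ≤ sup p < ∞ with 1/p locally log-Hölder continuous. Then there exists a constant C > 0 such that for every complex-valued sequence γ = (γ_{j,m})_{j∈ℕ₀,m∈ℤⁿ} satisfying Σ_{j=0}^∞ 2^{jnε/(1−ε)} ( ∫_{ℝⁿ} Σ_{m∈ℤⁿ} |γ_{j,m}|^{(1−ε)p(x)} χ_{j,m}(x) dx )^{1/(1−ε)} ≤ 1, one has ‖ Σ_{j=0}^∞ Σ_{m∈ℤⁿ} |γ_{j,m}|^{p(·)/r} χ_{j,m} | L_r(ℝⁿ) ‖ ≤ C. -/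

import Mathlib

/-!
The exponent `p` is only felt at one place. Put `f_j(x) = |γ_{j,m}|^{p(x)}` on `Q_{j,m}`, and let
`W_j` be the `j`-th term of the series in the hypothesis, so that
`∫ f_j^{1-ε} = 2^{-jn} (2^{jn} W_j)^{1-ε}`. On a cube of side `2^{-j}` the average of `f_j^{1-ε}` is
at most `(2^{jn} W_j)^{1-ε}`, hence `f_j ≤ 2^{jn} W_j` at some point of the cube. Log-Hölder
continuity extends this to the whole cube up to a constant `K`, provided `2^{jn} W_j` is replaced by
`T_j = 2^{jn} W_j + 1`, which lies between `1` and `2 * 2^{jn}` (`exists_rpow_ratio_le`,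
`rpow_le_of_average`). Thus `f_j ≤ K T_j` everywhere, and `∑ 2^{-jn} T_j ≤ 3`.

What remains no longer involves `p`. By `exists_envelope`, `T` has a majorant `E` with
`E_{j+1} ≥ 2^{n/2} E_j` and `∑ 2^{-jn} E_j` bounded. The pointwise inequality `tsum_rpow_le`,
applied with `K E_j` as dominating sequence, reads
`(∑_j f_j^{1/r})^r ≤ C ∑_j f_j^{1-ε} (K E_j)^ε`. Integrating, and using `2^{jn} W_j ≤ T_j ≤ E_j`, the
right-hand side becomes at most `C K ∑_j 2^{-jn} E_j`, a constant independent of `γ`.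
-/

open MeasureTheory ENNReal NNReal

noncomputable section

/-- The dyadic cube `Q_{j,m}` in `ℝⁿ`: centered at `2^{-j} m`, with sides parallel to the
coordinate axes and side length `2^{-j}`. -/
def Qcube (n : ℕ) (j : ℕ) (m : Fin n → ℤ) : Set (EuclideanSpace ℝ (Fin n)) :=
  {x | ∀ i, (2 : ℝ) ^ (-(j : ℝ)) * ((m i : ℝ) - 1 / 2) ≤ x i ∧
        x i < (2 : ℝ) ^ (-(j : ℝ)) * ((m i : ℝ) + 1 / 2)}

/-- A function `g : ℝⁿ → ℝ` is locally log-Hölder continuous if there exists `c > 0` such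
that `|g(x) − g(y)| ≤ c / log(e + 1/|x−y|)` for all `x, y ∈ ℝⁿ` (Euclidean distance). -/
def LocLogHolder {n : ℕ} (g : EuclideanSpace ℝ (Fin n) → ℝ) : Prop :=
  ∃ c : ℝ, 0 < c ∧ ∀ x y, |g x - g y| ≤ c / Real.log (Real.exp 1 + 1 / dist x y)

/-! ### A pointwise inequality for sequences -/

/-- A positive sequence growing at least geometrically contributes to `∑ min (u, 1/u)` only near the
index where it crosses `1`, so the sum is bounded independently of where the crossing occurs. -/
lemma sum_min_inv_le {ρ : ℝ} (hρ : 1 < ρ) (u : ℕ → ℝ) (hu : ∀ j, 0 < u j)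
    (hstep : ∀ j, ρ * u j ≤ u (j + 1)) (N : ℕ) :
    ∑ j ∈ Finset.range N, min (u j) (u j)⁻¹ ≤ 2 * (ρ / (ρ - 1)) := by
  set C := ρ / (ρ - 1) with hC
  have hρ1 : 0 < ρ - 1 := by linarith
  have hC1 : 1 < C := by rw [hC, one_lt_div hρ1]; linarith
  have hCρ : C * (ρ - 1) = ρ := by rw [hC]; field_simp
  -- The potential tracks the last term: before `u` exceeds `1` the sum is at most `C u`,
  -- and afterwards at most `2C - (C - 1) / u`.
  have key : ∀ N, ∑ j ∈ Finset.range (N + 1), min (u j) (u j)⁻¹ ≤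
      if u N ≤ 1 then C * u N else 2 * C - (C - 1) * (u N)⁻¹ := by
    intro N
    induction N with
    | zero =>
      have h0 := hu 0
      simp only [zero_add, Finset.sum_range_one]
      split_ifs with h
      · exact (min_le_left _ _).trans (by nlinarith)
      · have h1 : (u 0)⁻¹ ≤ 1 := inv_le_one_of_one_le₀ (by linarith)
        have h2 : 0 < (u 0)⁻¹ := by positivity
        exact (min_le_right _ _).trans (by nlinarith)
    | succ N ih =>
      rw [Finset.sum_range_succ]
      have h0 := hu N
      have h0' := hu (N + 1)
      have hs := hstep N
      have hle : u N ≤ u (N + 1) := by nlinarith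
      by_cases h' : u (N + 1) ≤ 1
      · have h : u N ≤ 1 := hle.trans h'
        rw [if_pos h] at ih
        rw [if_pos h']
        have h3 : C * u N + u (N + 1) ≤ C * u (N + 1) := by
          have : (C - 1) * ρ = C := by linarith
          nlinarith
        linarith [min_le_left (u (N + 1)) (u (N + 1))⁻¹]
      · rw [if_neg h']
        have hm := min_le_right (u (N + 1)) (u (N + 1))⁻¹
        by_cases h : u N ≤ 1
        · rw [if_pos h] at ih
          have h1 : (u (N + 1))⁻¹ ≤ 1 := inv_le_one_of_one_le₀ (by linarith)
          nlinarith
        · rw [if_neg h] at ih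
          have h4 : ρ * (u (N + 1))⁻¹ ≤ (u N)⁻¹ := by
            rw [← div_eq_mul_inv, div_le_iff₀ h0', inv_mul_eq_div, le_div_iff₀ h0]
            exact hs
          have : (C - 1) * ρ = C := by linarith
          have h5 : (C - 1) * (ρ * (u (N + 1))⁻¹) ≤ (C - 1) * (u N)⁻¹ :=
            mul_le_mul_of_nonneg_left h4 (by linarith)
          rw [← mul_assoc, this] at h5
          linarith
  calc ∑ j ∈ Finset.range N, min (u j) (u j)⁻¹
      ≤ ∑ j ∈ Finset.range (N + 1), min (u j) (u j)⁻¹ := by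
        rw [Finset.sum_range_succ]
        have := hu N
        have : 0 ≤ min (u N) (u N)⁻¹ := by positivity
        linarith
    _ ≤ _ := key N
    _ ≤ 2 * C := by
        have h0 := hu N
        split_ifs with h
        · nlinarith
        · have : 0 < (u N)⁻¹ := by positivity
          nlinarith

/-- Interpolates the `L_∞`-type bound `φ ≤ τ` with the bound on `φ ^ (1 - ε) * τ ^ ε`: the result
decays as `τ` moves away from `1` in either direction. -/
lemma le_rpow_and_le_rpow_neg {ε φ τ : ℝ} (hε₀ : 0 < ε) (hε₁ : ε < 1) (hφ : 0 ≤ φ)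
    (hτ : 0 < τ) (h1 : φ ≤ τ) (h2 : φ ^ (1 - ε) * τ ^ ε ≤ 1) :
    φ ≤ τ ^ ε ∧ φ ≤ τ ^ (-ε) := by
  rcases le_total τ 1 with h | h
  · have h3 : τ ≤ τ ^ ε := by
      simpa using Real.rpow_le_rpow_of_exponent_ge hτ h hε₁.le
    have h4 : τ ^ ε ≤ τ ^ (-ε) := Real.rpow_le_rpow_of_exponent_ge hτ h (by linarith)
    exact ⟨h1.trans h3, h1.trans (h3.trans h4)⟩
  · have h4 : τ ^ (-ε) ≤ τ ^ ε := Real.rpow_le_rpow_of_exponent_le h (by linarith)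
    have h5 : φ ^ (1 - ε) ≤ τ ^ (-ε) := by
      rw [Real.rpow_neg hτ.le, ← one_div, le_div_iff₀ (by positivity)]
      exact h2
    have h6 : τ ^ (-ε) ≤ 1 := Real.rpow_le_one_of_one_le_of_nonpos h (by linarith)
    have h7 : φ ≤ 1 := by
      by_contra hc
      have := Real.one_lt_rpow (not_le.1 hc) (show 0 < 1 - ε by linarith)
      linarith
    have h8 : φ ≤ φ ^ (1 - ε) := by
      rcases hφ.eq_or_lt with h0 | h0
      · rw [← h0]; exact Real.rpow_nonneg le_rfl _
      · simpa using Real.rpow_le_rpow_of_exponent_ge h0 h7 (show 1 - ε ≤ 1 by linarith)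
    have h9 := h8.trans h5
    exact ⟨h9.trans h4, h9⟩

/-- The pointwise inequality behind the embedding: if `f` is dominated by a geometrically growing
sequence `E`, the `r`-th power of `∑ f ^ (1 / r)` is controlled by a sum that is linear in the
quantities `f j ^ (1 - ε)` whose integrals are given. Both sides are homogeneous of degree one in
`(f, E)`, and dividing by the right-hand sum `M` reduces the claim to `sum_min_inv_le` for
`u j = (E j / M) ^ (ε / r)`. -/
lemma tsum_rpow_le {q ε r : ℝ} (hq : 1 < q) (hε₀ : 0 < ε) (hε₁ : ε < 1) (hr : 1 < r) :
    ∃ C : ℝ, 0 < C ∧ ∀ f E : ℕ → ℝ, (∀ j, 0 ≤ f j) → (∀ j, f j ≤ E j) → (∀ j, 0 < E j) →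
      (∀ j, q * E j ≤ E (j + 1)) →
      (∑' j, ENNReal.ofReal (f j ^ (1 / r))) ^ r ≤
        ENNReal.ofReal C * ∑' j, ENNReal.ofReal (f j ^ (1 - ε) * E j ^ ε) := by
  have hr0 : 0 < r := by linarith
  set ρ := q ^ (ε / r) with hρdef
  have hρ : 1 < ρ := Real.one_lt_rpow hq (by positivity)
  have hρ1 : 0 < ρ - 1 := by linarith
  set B := 2 * (ρ / (ρ - 1)) with hB
  have hB0 : 0 < B := by positivity
  refine ⟨B ^ r, by positivity, fun f E hf hfE hE hstep => ?_⟩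
  set M := ∑' j, ENNReal.ofReal (f j ^ (1 - ε) * E j ^ ε) with hM
  rcases eq_or_ne M ⊤ with hMt | hMt
  · rw [hMt, ENNReal.mul_top (by simpa using by positivity)]
    exact le_top
  have hterm : ∀ j, f j ^ (1 - ε) * E j ^ ε ≤ M.toReal := fun j =>
    (ENNReal.ofReal_le_iff_le_toReal hMt).1 (ENNReal.le_tsum j)
  rcases eq_or_ne M 0 with hM0 | hM0
  · have hf0 : ∀ j, f j = 0 := by
      intro j
      by_contra hne
      have h1 : 0 < f j := lt_of_le_of_ne (hf j) (Ne.symm hne)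
      have h2 := hE j
      have h3 := hterm j
      rw [hM0] at h3
      have : 0 < f j ^ (1 - ε) * E j ^ ε := by positivity
      simp at h3
      linarith
    have : ∑' j, ENNReal.ofReal (f j ^ (1 / r)) = 0 := by
      simp [hf0, Real.zero_rpow (inv_pos.2 hr0).ne']
    rw [this, ENNReal.zero_rpow_of_pos hr0]
    exact zero_le
  set μ := M.toReal with hμ
  have hμ0 : 0 < μ := ENNReal.toReal_pos hM0 hMt
  set u : ℕ → ℝ := fun j => (E j / μ) ^ (ε / r) with hu
  have hu0 : ∀ j, 0 < u j := fun j => by have := hE j; simp only [hu]; positivity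
  have hust : ∀ j, ρ * u j ≤ u (j + 1) := by
    intro j
    have := hE j
    simp only [hu, hρdef]
    rw [← Real.mul_rpow (by linarith) (by positivity)]
    refine Real.rpow_le_rpow (by positivity) ?_ (by positivity)
    rw [← mul_div_assoc]
    exact div_le_div_of_nonneg_right (hstep j) hμ0.le
  have hterm2 : ∀ j, f j ^ (1 / r) ≤ μ ^ (1 / r) * min (u j) (u j)⁻¹ := by
    intro j
    have hEj := hE j
    have hfj := hf j
    have hτ : 0 < E j / μ := by positivity
    have hφ : 0 ≤ f j / μ := by positivity
    have h2 : (f j / μ) ^ (1 - ε) * (E j / μ) ^ ε ≤ 1 := by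
      rw [Real.div_rpow hfj hμ0.le, Real.div_rpow hEj.le hμ0.le, div_mul_div_comm,
        ← Real.rpow_add hμ0]
      simpa using (div_le_one hμ0).2 (hterm j)
    obtain ⟨ha, hb⟩ := le_rpow_and_le_rpow_neg hε₀ hε₁ hφ hτ
      (div_le_div_of_nonneg_right (hfE j) hμ0.le) h2
    have hsplit : f j ^ (1 / r) = μ ^ (1 / r) * (f j / μ) ^ (1 / r) := by
      rw [← Real.mul_rpow hμ0.le hφ]
      congr 1
      field_simp
    rw [hsplit]
    refine mul_le_mul_of_nonneg_left (le_min ?_ ?_) (by positivity)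
    · refine (Real.rpow_le_rpow hφ ha (by positivity)).trans (le_of_eq ?_)
      rw [← Real.rpow_mul hτ.le]
      simp only [hu]
      congr 1
      ring
    · refine (Real.rpow_le_rpow hφ hb (by positivity)).trans (le_of_eq ?_)
      simp only [hu]
      rw [← Real.rpow_mul hτ.le, ← Real.rpow_neg hτ.le]
      congr 1
      ring
  have hsum : ∑' j, ENNReal.ofReal (f j ^ (1 / r)) ≤ ENNReal.ofReal (μ ^ (1 / r) * B) := by
    refine ENNReal.tsum_le_of_sum_range_le fun N => ?_
    rw [← ENNReal.ofReal_sum_of_nonneg fun j _ => Real.rpow_nonneg (hf j) _]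
    refine ENNReal.ofReal_le_ofReal ?_
    calc ∑ j ∈ Finset.range N, f j ^ (1 / r)
        ≤ ∑ j ∈ Finset.range N, μ ^ (1 / r) * min (u j) (u j)⁻¹ :=
          Finset.sum_le_sum fun j _ => hterm2 j
      _ ≤ _ := by
          rw [← Finset.mul_sum]
          exact mul_le_mul_of_nonneg_left (sum_min_inv_le hρ u hu0 hust N) (by positivity)
  calc _ ≤ (ENNReal.ofReal (μ ^ (1 / r) * B)) ^ r := ENNReal.rpow_le_rpow hsum hr0.le
    _ = ENNReal.ofReal (B ^ r) * M := by
      rw [ENNReal.ofReal_rpow_of_nonneg (by positivity) hr0.le,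
        Real.mul_rpow (by positivity) hB0.le, ← Real.rpow_mul hμ0.le,
        one_div_mul_cancel hr0.ne', Real.rpow_one, mul_comm, ENNReal.ofReal_mul (by positivity),
        hμ, ENNReal.ofReal_toReal hMt]

/-! ### Dyadic cubes -/

/-- The index of the dyadic cube of generation `j` that contains `x`. -/
def cubeIdx {n : ℕ} (j : ℕ) (x : EuclideanSpace ℝ (Fin n)) : Fin n → ℤ :=
  fun i => ⌊(2 : ℝ) ^ j * x i + 1 / 2⌋

lemma mem_Qcube_iff {n : ℕ} {j : ℕ} {m : Fin n → ℤ} {x : EuclideanSpace ℝ (Fin n)} :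
    x ∈ Qcube n j m ↔ cubeIdx j x = m := by
  have h2 : (0 : ℝ) < 2 ^ j := by positivity
  simp only [Qcube, Set.mem_ofPred_eq, funext_iff, cubeIdx, Int.floor_eq_iff]
  refine forall_congr' fun i => ?_
  rw [Real.rpow_neg zero_le_two, Real.rpow_natCast, inv_mul_le_iff₀ h2, lt_inv_mul_iff₀ h2]
  constructor <;> rintro ⟨h, h'⟩ <;> constructor <;> linarith

lemma tsum_mul_indicator_Qcube {n : ℕ} (j : ℕ) (F : (Fin n → ℤ) → ℝ≥0∞)
    (x : EuclideanSpace ℝ (Fin n)) :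
    ∑' m, F m * (Qcube n j m).indicator (fun _ => (1 : ℝ≥0∞)) x = F (cubeIdx j x) := by
  rw [tsum_eq_single (cubeIdx j x)]
  · rw [Set.indicator_of_mem (mem_Qcube_iff.2 rfl), mul_one]
  · intro m hm
    rw [Set.indicator_of_notMem (fun h => hm (mem_Qcube_iff.1 h).symm), mul_zero]

lemma measurable_cubeIdx {n : ℕ} (j : ℕ) :
    Measurable (cubeIdx j : EuclideanSpace ℝ (Fin n) → Fin n → ℤ) := by
  refine measurable_pi_lambda _ fun i => Int.measurable_floor.comp ?_
  fun_prop

lemma volume_Qcube {n : ℕ} (j : ℕ) (m : Fin n → ℤ) :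
    volume (Qcube n j m) = ENNReal.ofReal (((2 : ℝ) ^ j)⁻¹ ^ n) := by
  have hset : Qcube n j m = (MeasurableEquiv.toLp 2 (Fin n → ℝ)).symm ⁻¹'
      (Set.univ.pi fun i => Set.Ico (((2 : ℝ) ^ j)⁻¹ * ((m i : ℝ) - 1 / 2))
        (((2 : ℝ) ^ j)⁻¹ * ((m i : ℝ) + 1 / 2))) := by
    ext x
    simp [Qcube, Real.rpow_neg]
  rw [hset, (EuclideanSpace.volume_preserving_symm_measurableEquiv_toLp (Fin n)).measure_preimage_equiv,
    Real.volume_pi_Ico]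
  have : ∀ i, ((2 : ℝ) ^ j)⁻¹ * ((m i : ℝ) + 1 / 2) - ((2 : ℝ) ^ j)⁻¹ * ((m i : ℝ) - 1 / 2)
      = ((2 : ℝ) ^ j)⁻¹ := fun i => by ring
  simp only [this]
  rw [Finset.prod_const, Finset.card_univ, Fintype.card_fin, ENNReal.ofReal_pow (by positivity)]

lemma dist_le_of_mem_Qcube {n : ℕ} {j : ℕ} {m : Fin n → ℤ} {x y : EuclideanSpace ℝ (Fin n)}
    (hx : x ∈ Qcube n j m) (hy : y ∈ Qcube n j m) : dist x y ≤ √n * ((2 : ℝ) ^ j)⁻¹ := by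
  rw [EuclideanSpace.dist_eq]
  have h2 : (0 : ℝ) < ((2 : ℝ) ^ j)⁻¹ := by positivity
  have h : ∀ i, dist (x i) (y i) ^ 2 ≤ (((2 : ℝ) ^ j)⁻¹) ^ 2 := by
    intro i
    have hxi := hx i
    have hyi := hy i
    rw [Real.rpow_neg zero_le_two, Real.rpow_natCast] at hxi hyi
    refine pow_le_pow_left₀ dist_nonneg ?_ 2
    rw [Real.dist_eq, abs_le]
    constructor <;> linarith [hxi.1, hxi.2, hyi.1, hyi.2]
  calc _ ≤ √(n * (((2 : ℝ) ^ j)⁻¹) ^ 2) := by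
        refine Real.sqrt_le_sqrt ((Finset.sum_le_sum fun i _ => h i).trans ?_)
        simp
    _ = _ := by rw [Real.sqrt_mul (by positivity), Real.sqrt_sq h2.le]

/-! ### Envelopes and exponent comparison on cubes -/

/-- The use of log-Hölder continuity: on a cube of side `2^{-j}` the oscillation of `1/p` is
`O(1/(j+1))`, so numbers `T` between `1` and about `2^{jn}` change at most by a bounded factor when
raised to the power `p x / p y`. -/
lemma exists_rpow_ratio_le {n : ℕ} (hn : 0 < n) {p : EuclideanSpace ℝ (Fin n) → ℝ} {c b : ℝ}
    (hc : 0 < c) (hlow : ∀ x, c ≤ p x) (hup : ∀ x, p x ≤ b)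
    (hinv : LocLogHolder fun x => 1 / p x) :
    ∃ K : ℝ, 1 ≤ K ∧ ∀ (j : ℕ) (m : Fin n → ℤ), ∀ x ∈ Qcube n j m, ∀ y ∈ Qcube n j m,
      ∀ T : ℝ, 1 ≤ T → T ≤ 2 * ((2 : ℝ) ^ n) ^ j → T ^ (p x / p y) ≤ K * T := by
  obtain ⟨cl, hcl, hH⟩ := hinv
  have hp : ∀ x, 0 < p x := fun x => hc.trans_le (hlow x)
  have hb : 0 < b := (hp 0).trans_le (hup 0)
  set N : ℝ := √n with hN
  have hN1 : 1 ≤ N := by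
    rw [hN, Real.one_le_sqrt]
    exact_mod_cast hn
  have hN0 : 0 < N := by linarith
  have hlN : 0 ≤ Real.log N := Real.log_nonneg hN1
  set κ : ℝ := b * cl * (n * (1 + Real.log N) + 1) with hκ
  have hκ0 : 0 ≤ κ := by positivity
  refine ⟨Real.exp κ, Real.one_le_exp hκ0, fun j m x hx y hy T hT1 hT2 => ?_⟩
  have hT0 : 0 < T := by linarith
  have h2j : (0 : ℝ) < 2 ^ j := by positivity
  set L := Real.log (Real.exp 1 + 2 ^ j / N) with hL
  have hL1 : 1 ≤ L := by
    rw [hL, Real.le_log_iff_exp_le (by positivity)]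
    have : 0 < 2 ^ j / N := by positivity
    linarith
  have hL2 : j * Real.log 2 - Real.log N ≤ L := by
    rw [← Real.log_pow, ← Real.log_div h2j.ne' hN0.ne']
    exact Real.log_le_log (by positivity) (by linarith [Real.exp_pos 1])
  have hL3 : j * Real.log 2 ≤ (1 + Real.log N) * L := by nlinarith
  have hlog2 : Real.log 2 ≤ 1 := by linarith [Real.log_two_lt_d9]
  have hlT : Real.log T ≤ (n * (1 + Real.log N) + 1) * L := by
    calc Real.log T ≤ Real.log (2 * ((2 : ℝ) ^ n) ^ j) := Real.log_le_log hT0 hT2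
      _ = Real.log 2 + n * (j * Real.log 2) := by
        rw [Real.log_mul two_ne_zero (by positivity), Real.log_pow, Real.log_pow]
        ring
      _ ≤ 1 * L + n * ((1 + Real.log N) * L) := by
        have := mul_le_mul_of_nonneg_left hL3 (Nat.cast_nonneg (α := ℝ) n)
        linarith
      _ = _ := by ring
  have hdiff : 1 / p y - 1 / p x ≤ cl / L := by
    rcases eq_or_ne x y with rfl | hne
    · simp only [sub_self]
      positivity
    · refine (le_abs_self _).trans ((hH y x).trans ?_)
      refine div_le_div_of_nonneg_left hcl.le (by linarith) ?_
      refine Real.log_le_log (by positivity) ?_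
      have hd : 0 < dist y x := dist_pos.2 hne.symm
      have := dist_le_of_mem_Qcube hy hx
      have h3 : 2 ^ j / N ≤ 1 / dist y x := by
        rw [div_le_div_iff₀ hN0 hd, one_mul]
        calc 2 ^ j * dist y x ≤ 2 ^ j * (N * ((2 : ℝ) ^ j)⁻¹) :=
              mul_le_mul_of_nonneg_left this h2j.le
          _ = N := by field_simp
      linarith
  have hratio : p x / p y - 1 ≤ b * (cl / L) := by
    have hpx := hp x
    have hpy := hp y
    have e : p x / p y - 1 = p x * (1 / p y - 1 / p x) := by field_simp
    have h0 : 0 ≤ cl / L := by positivity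
    rw [e]
    exact (mul_le_mul_of_nonneg_left hdiff hpx.le).trans (mul_le_mul_of_nonneg_right (hup x) h0)
  calc T ^ (p x / p y) ≤ T ^ (b * (cl / L) + 1) :=
        Real.rpow_le_rpow_of_exponent_le hT1 (by linarith)
    _ = Real.exp (Real.log T * (b * (cl / L))) * T := by
        rw [Real.rpow_add hT0, Real.rpow_one, Real.rpow_def_of_pos hT0]
    _ ≤ Real.exp κ * T := by
        refine mul_le_mul_of_nonneg_right (Real.exp_le_exp.2 ?_) hT0.le
        calc _ ≤ (n * (1 + Real.log N) + 1) * L * (b * (cl / L)) :=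
              mul_le_mul_of_nonneg_right hlT (by positivity)
          _ = κ := by rw [hκ]; field_simp

/-- Discrete Hardy inequality: `T` has a majorant `E` that grows at least by the factor `q` at each
step, with `∑ E j / q^{2j}` still controlled. The majorant is `E j = ∑_{i ≤ j} q^{j - i} T i`. -/
lemma exists_envelope {q B : ℝ} (hq : 1 < q) (T : ℕ → ℝ) (hT : ∀ j, 0 < T j)
    (hB : ∀ N, ∑ j ∈ Finset.range N, T j / (q ^ 2) ^ j ≤ B) :
    ∃ E : ℕ → ℝ, (∀ j, T j ≤ E j) ∧ (∀ j, q * E j ≤ E (j + 1)) ∧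
      ∀ N, ∑ j ∈ Finset.range N, E j / (q ^ 2) ^ j ≤ q / (q - 1) * B := by
  have hq0 : 0 < q := by linarith
  have hq1 : 0 < q - 1 := by linarith
  set E : ℕ → ℝ := fun j => q ^ j * ∑ i ∈ Finset.range (j + 1), T i / q ^ i with hE
  have hE0 : E 0 = T 0 := by simp [hE]
  have hrec : ∀ j, E (j + 1) = q * E j + T (j + 1) := by
    intro j
    simp only [hE]
    rw [Finset.sum_range_succ _ (j + 1)]
    field_simp
    ring
  have hEpos : ∀ j, 0 ≤ E j := fun j =>
    mul_nonneg (by positivity) (Finset.sum_nonneg fun i _ => div_nonneg (hT i).le (by positivity))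
  refine ⟨E, ?_, fun j => ?_, fun N => ?_⟩
  · rintro (_ | j)
    · exact hE0.ge
    · rw [hrec]
      have := hEpos j
      have : 0 ≤ q * E j := by positivity
      linarith
  · rw [hrec]
    linarith [hT (j + 1)]
  · -- The recursion for `E` turns the estimate, corrected by its last term, into an identity.
    have key : ∀ N, ∑ j ∈ Finset.range (N + 1), E j / (q ^ 2) ^ j =
        q / (q - 1) * ∑ j ∈ Finset.range (N + 1), T j / (q ^ 2) ^ j
          - E N / (q ^ 2) ^ N / (q - 1) := by
      intro N
      induction N with
      | zero =>
        simp [hE0]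
        field_simp
      | succ N ih =>
        rw [Finset.sum_range_succ, ih, Finset.sum_range_succ _ (N + 1), hrec]
        field_simp
        ring
    rcases N with _ | N
    · simp only [Finset.range_zero, Finset.sum_empty]
      have := hB 0
      simp only [Finset.range_zero, Finset.sum_empty] at this
      positivity
    · rw [key]
      have h1 := hEpos N
      have h2 : 0 ≤ E N / (q ^ 2) ^ N / (q - 1) := by positivity
      have h3 := mul_le_mul_of_nonneg_left (hB (N + 1)) (show 0 ≤ q / (q - 1) by positivity)
      linarith

/-- An integral bound over a cube gives a bound at some point `y` of the cube, which the comparison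
of exponents `hK` transfers to every point of the cube. -/
lemma rpow_le_of_average {n : ℕ} {ε : ℝ} (hε₁ : ε < 1) {p : EuclideanSpace ℝ (Fin n) → ℝ}
    (hp : ∀ x, 0 < p x) (hpmeas : Measurable p) {j : ℕ} {m : Fin n → ℤ} {α K S T : ℝ}
    (hα : 0 ≤ α) (hS : 0 ≤ S) (hST : S ≤ T)
    (hK : ∀ x ∈ Qcube n j m, ∀ y ∈ Qcube n j m, T ^ (p x / p y) ≤ K * T)
    (hint : ∫⁻ y in Qcube n j m, ENNReal.ofReal ((α ^ p y) ^ (1 - ε)) ≤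
      ENNReal.ofReal ((((2 : ℝ) ^ n) ^ j)⁻¹ * S ^ (1 - ε))) :
    ∀ x ∈ Qcube n j m, α ^ p x ≤ K * T := by
  intro x hx
  have h1ε : 0 < 1 - ε := by linarith
  have hvol : volume (Qcube n j m) = ENNReal.ofReal (((2 : ℝ) ^ n) ^ j)⁻¹ := by
    rw [volume_Qcube, inv_pow, ← pow_mul, ← pow_mul, mul_comm]
  have hv0 : volume (Qcube n j m) ≠ 0 := by rw [hvol]; simp
  have hvt : volume (Qcube n j m) ≠ ⊤ := by rw [hvol]; exact ENNReal.ofReal_ne_top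
  obtain ⟨y, hy, hyle⟩ := exists_le_setLAverage (f := fun y => ENNReal.ofReal ((α ^ p y) ^ (1 - ε)))
    hv0 hvt (by fun_prop)
  have h1 : ENNReal.ofReal ((α ^ p y) ^ (1 - ε)) ≤ ENNReal.ofReal (S ^ (1 - ε)) := by
    refine hyle.trans ?_
    rw [setLAverage_eq]
    refine (ENNReal.div_le_div_right hint _).trans ?_
    rw [ENNReal.ofReal_mul (by positivity), ← hvol]
    refine ENNReal.div_le_of_le_mul ?_
    rw [mul_comm]
  rw [ENNReal.ofReal_le_ofReal_iff (by positivity), Real.rpow_le_rpow_iff (by positivity) hS h1ε]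
    at h1
  have hpy := hp y
  calc α ^ p x = (α ^ p y) ^ (p x / p y) := by
        rw [← Real.rpow_mul hα]
        congr 1
        field_simp
    _ ≤ T ^ (p x / p y) :=
        Real.rpow_le_rpow (by positivity) (h1.trans hST) (div_nonneg (hp x).le (hp y).le)
    _ ≤ K * T := hK x hx y hy

/-! ### The modular estimate -/

/-- **Core modular estimate of the variable-exponent Franke embedding.**
If `ε ∈ (0,1)`, `r > 1` and `p : ℝⁿ → (0,∞)` satisfies `0 < inf p ≤ sup p < ∞` with `1/p`
locally log-Hölder continuous, then there is `C > 0` such that every complex sequence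
`γ = (γ_{j,m})` with
`Σ_j 2^{jnε/(1−ε)} (∫ Σ_m |γ_{j,m}|^{(1−ε)p(x)} χ_{j,m}(x) dx)^{1/(1−ε)} ≤ 1`
satisfies `‖Σ_j Σ_m |γ_{j,m}|^{p(·)/r} χ_{j,m} | L_r(ℝⁿ)‖ ≤ C`. -/
theorem franke_core_modular_estimate (n : ℕ) (hn : 0 < n) (ε r : ℝ)
    (hε₀ : 0 < ε) (hε₁ : ε < 1) (hr : 1 < r)
    (p : EuclideanSpace ℝ (Fin n) → ℝ) (c b : ℝ) (hc : 0 < c)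
    (hlow : ∀ x, c ≤ p x) (hup : ∀ x, p x ≤ b) (hpmeas : Measurable p)
    (hinv : LocLogHolder fun x => 1 / p x) :
    ∃ C : ℝ≥0, 0 < C ∧ ∀ γ : ℕ → (Fin n → ℤ) → ℂ,
      (∑' j : ℕ, (2 : ℝ≥0∞) ^ (((j : ℝ) * n * ε) / (1 - ε)) *
        (∫⁻ x, ∑' m : Fin n → ℤ, (‖γ j m‖₊ : ℝ≥0∞) ^ ((1 - ε) * p x) *
            (Qcube n j m).indicator (fun _ => (1 : ℝ≥0∞)) x) ^ (1 / (1 - ε))) ≤ 1 →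
      (∫⁻ x, (∑' j : ℕ, ∑' m : Fin n → ℤ, (‖γ j m‖₊ : ℝ≥0∞) ^ (p x / r) *
            (Qcube n j m).indicator (fun _ => (1 : ℝ≥0∞)) x) ^ r) ^ (1 / r)
      ≤ C := by
  have h1ε : 0 < 1 - ε := by linarith
  have hr0 : 0 < r := by linarith
  have hp : ∀ x, 0 < p x := fun x => hc.trans_le (hlow x)
  -- With `q ^ 2 = 2 ^ n`, an envelope growing like `q ^ j` is still summable against `2 ^ (-j n)`.
  set q : ℝ := √(2 ^ n) with hqdef
  have hq2 : q ^ 2 = 2 ^ n := Real.sq_sqrt (by positivity)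
  have hPn : (2 : ℝ) ≤ 2 ^ n := by
    simpa using pow_le_pow_right₀ (one_le_two (α := ℝ)) hn
  have hq : 1 < q := by
    rw [hqdef, Real.lt_sqrt zero_le_one]
    linarith
  have hq1 : 0 < q - 1 := by linarith
  obtain ⟨C, hC, hCmain⟩ := tsum_rpow_le hq hε₀ hε₁ hr
  obtain ⟨K, hK1, hK⟩ := exists_rpow_ratio_le hn hc hlow hup hinv
  have hK0 : 0 < K := by linarith
  have hD : 0 < C * (K * (q / (q - 1) * 3)) := by
    have : 0 < q := by linarith
    positivity
  refine ⟨Real.toNNReal ((C * (K * (q / (q - 1) * 3))) ^ (1 / r)), by simpa using by positivity,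
    fun γ H => ?_⟩
  set f : ℕ → EuclideanSpace ℝ (Fin n) → ℝ := fun j x => ‖γ j (cubeIdx j x)‖ ^ p x with hf
  have hf0 : ∀ j x, 0 ≤ f j x := fun j x => by simp only [hf]; positivity
  have hfmeas : ∀ j, Measurable (f j) := fun j =>
    (((measurable_of_countable fun m => ‖γ j m‖).comp (measurable_cubeIdx j))).pow hpmeas
  have hcoe : ∀ (z : ℂ) (x) (s : ℝ), 0 ≤ s →
      (‖z‖₊ : ℝ≥0∞) ^ (s * p x) = ENNReal.ofReal ((‖z‖ ^ p x) ^ s) := by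
    intro z x s hs
    have := hp x
    rw [← Real.rpow_mul (norm_nonneg _), mul_comm s,
      ← ENNReal.ofReal_rpow_of_nonneg (norm_nonneg _) (by positivity), ofReal_norm]
    rfl
  have hI : ∀ j, (∫⁻ x, ∑' m : Fin n → ℤ, (‖γ j m‖₊ : ℝ≥0∞) ^ ((1 - ε) * p x) *
      (Qcube n j m).indicator (fun _ => (1 : ℝ≥0∞)) x) =
      ∫⁻ x, ENNReal.ofReal (f j x ^ (1 - ε)) := by
    intro j
    refine lintegral_congr fun x => ?_
    rw [tsum_mul_indicator_Qcube j (fun m => (‖γ j m‖₊ : ℝ≥0∞) ^ ((1 - ε) * p x)) x,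
      hcoe _ _ _ h1ε.le]
  have hG : ∀ j x, (∑' m : Fin n → ℤ, (‖γ j m‖₊ : ℝ≥0∞) ^ (p x / r) *
      (Qcube n j m).indicator (fun _ => (1 : ℝ≥0∞)) x) = ENNReal.ofReal (f j x ^ (1 / r)) := by
    intro j x
    rw [tsum_mul_indicator_Qcube j (fun m => (‖γ j m‖₊ : ℝ≥0∞) ^ (p x / r)) x,
      show p x / r = 1 / r * p x by ring, hcoe _ _ _ (by positivity)]
  simp only [hI] at H
  simp only [hG]
  set w : ℕ → ℝ≥0∞ := fun j => (2 : ℝ≥0∞) ^ (((j : ℝ) * n * ε) / (1 - ε)) *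
    (∫⁻ x, ENNReal.ofReal (f j x ^ (1 - ε))) ^ (1 / (1 - ε)) with hw
  have hw1 : ∀ j, w j ≤ 1 := fun j => (ENNReal.le_tsum j).trans H
  set W : ℕ → ℝ := fun j => (w j).toReal with hWdef
  have hW0 : ∀ j, 0 ≤ W j := fun j => ENNReal.toReal_nonneg
  have hWw : ∀ j, ENNReal.ofReal (W j) = w j := fun j =>
    ENNReal.ofReal_toReal (ne_top_of_le_ne_top ENNReal.one_ne_top (hw1 j))
  have hW1 : ∀ j, W j ≤ 1 := fun j => by
    rw [← ENNReal.ofReal_le_one, hWw]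
    exact hw1 j
  set X : ℕ → ℝ := fun j => ((2 : ℝ) ^ n) ^ j with hX
  have hX0 : ∀ j, 0 < X j := fun j => by simp only [hX]; positivity
  have hX1 : ∀ j, 1 ≤ X j := fun j => one_le_pow₀ (by linarith)
  have hIW : ∀ j, ∫⁻ x, ENNReal.ofReal (f j x ^ (1 - ε)) =
      ENNReal.ofReal ((X j)⁻¹ * (X j * W j) ^ (1 - ε)) := by
    intro j
    have hXj := hX0 j
    have h1 : ENNReal.ofReal (X j ^ ε) * ∫⁻ x, ENNReal.ofReal (f j x ^ (1 - ε)) =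
        ENNReal.ofReal (W j ^ (1 - ε)) := by
      rw [← ENNReal.ofReal_rpow_of_nonneg (hW0 j) h1ε.le, hWw]
      simp only [hw]
      rw [ENNReal.mul_rpow_of_nonneg _ _ h1ε.le, ← ENNReal.rpow_mul, ← ENNReal.rpow_mul,
        div_mul_cancel₀ _ h1ε.ne', div_mul_cancel₀ _ h1ε.ne', ENNReal.rpow_one]
      congr 1
      simp only [hX]
      rw [← pow_mul, ← Real.rpow_natCast, ← Real.rpow_mul zero_le_two,
        ← ENNReal.ofReal_rpow_of_nonneg zero_le_two (by positivity)]
      congr 1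
      · simp
      · push_cast
        ring
    have h2 : (X j)⁻¹ * (X j * W j) ^ (1 - ε) = (X j ^ ε)⁻¹ * W j ^ (1 - ε) := by
      rw [Real.mul_rpow hXj.le (hW0 j), Real.rpow_sub hXj, Real.rpow_one]
      field_simp
    rw [h2, ENNReal.ofReal_mul (by positivity), ← h1, ← mul_assoc,
      ← ENNReal.ofReal_mul (by positivity), inv_mul_cancel₀ (by positivity), ENNReal.ofReal_one,
      one_mul]
  -- The summand `1` keeps `T j` in the range `[1, 2 * 2 ^ (j n)]` where `exists_rpow_ratio_le`
  -- applies, even when `W j` is much smaller than `2 ^ (-j n)`; its total cost `∑ 2 ^ (-j n)` is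
  -- finite.
  set T : ℕ → ℝ := fun j => X j * W j + 1 with hT
  have hT1 : ∀ j, 1 ≤ T j := fun j => by
    have := mul_nonneg (hX0 j).le (hW0 j)
    simp only [hT]
    linarith
  have hT2 : ∀ j, T j ≤ 2 * X j := fun j => by
    have := mul_le_mul_of_nonneg_left (hW1 j) (hX0 j).le
    have := hX1 j
    simp only [hT]
    linarith
  have hfT : ∀ j x, f j x ≤ K * T j := by
    intro j x
    have hx : x ∈ Qcube n j (cubeIdx j x) := mem_Qcube_iff.2 rfl
    refine rpow_le_of_average (S := X j * W j) hε₁ hp hpmeas (norm_nonneg _)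
      (mul_nonneg (hX0 j).le (hW0 j)) (by simp only [hT]; linarith)
      (fun x hx y hy => hK j _ x hx y hy _ (hT1 j) (hT2 j)) ?_ x hx
    refine le_trans (le_of_eq ?_) ((setLIntegral_le_lintegral (Qcube n j (cubeIdx j x)) _).trans
      (hIW j).le)
    refine setLIntegral_congr_fun ?_ fun y hy => ?_
    · have : Qcube n j (cubeIdx j x) = cubeIdx j ⁻¹' {cubeIdx j x} := by
        ext y
        exact mem_Qcube_iff
      rw [this]
      exact measurable_cubeIdx j (measurableSet_singleton _)
    · simp only [hf, mem_Qcube_iff.1 hy]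
  have hTsum : ∀ N, ∑ j ∈ Finset.range N, T j / (q ^ 2) ^ j ≤ 3 := by
    intro N
    have h1 : ∑ j ∈ Finset.range N, W j ≤ 1 := by
      rw [← ENNReal.ofReal_le_one, ENNReal.ofReal_sum_of_nonneg fun j _ => hW0 j]
      simp only [hWw]
      exact (ENNReal.sum_le_tsum _).trans H
    have h2 : ∑ j ∈ Finset.range N, (1 / 2 : ℝ) ^ j ≤ 2 := sum_geometric_two_le N
    calc _ ≤ ∑ j ∈ Finset.range N, (W j + (1 / 2 : ℝ) ^ j) := by
          refine Finset.sum_le_sum fun j _ => ?_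
          have hXj := hX0 j
          have h3 : (X j)⁻¹ ≤ (1 / 2 : ℝ) ^ j := by
            rw [one_div, inv_pow]
            exact inv_anti₀ (by positivity) (pow_le_pow_left₀ zero_le_two hPn j)
          have h4 : T j / (q ^ 2) ^ j = W j + (X j)⁻¹ := by
            rw [hq2]
            change (X j * W j + 1) / X j = _
            field_simp
          linarith
      _ ≤ 3 := by
          rw [Finset.sum_add_distrib]
          linarith
  obtain ⟨E, hTE, hEstep, hEsum⟩ := exists_envelope hq T (fun j => by linarith [hT1 j]) hTsum
  have hE0 : ∀ j, 0 < E j := fun j => by linarith [hT1 j, hTE j]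
  have hIE : ∀ j, ∫⁻ x, ENNReal.ofReal (f j x ^ (1 - ε) * (K * E j) ^ ε) ≤
      ENNReal.ofReal (K * (E j / (q ^ 2) ^ j)) := by
    intro j
    have hKE : 0 < K * E j := mul_pos hK0 (hE0 j)
    have hXj := hX0 j
    have hXW : X j * W j ≤ K * E j := by
      have h1 : X j * W j ≤ E j := by
        have := hTE j
        simp only [hT] at this
        linarith
      nlinarith [hE0 j]
    simp only [ENNReal.ofReal_mul (Real.rpow_nonneg (hf0 j _) _)]
    rw [lintegral_mul_const' _ _ ENNReal.ofReal_ne_top, hIW,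
      ← ENNReal.ofReal_mul (mul_nonneg (by positivity)
        (Real.rpow_nonneg (mul_nonneg hXj.le (hW0 j)) _))]
    refine ENNReal.ofReal_le_ofReal ?_
    calc _ ≤ (X j)⁻¹ * (K * E j) ^ (1 - ε) * (K * E j) ^ ε := by
          refine mul_le_mul_of_nonneg_right (mul_le_mul_of_nonneg_left ?_ (by positivity))
            (by positivity)
          exact Real.rpow_le_rpow (mul_nonneg hXj.le (hW0 j)) hXW h1ε.le
      _ = _ := by
          rw [mul_assoc, ← Real.rpow_add hKE, sub_add_cancel, Real.rpow_one, hq2]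
          change (X j)⁻¹ * (K * E j) = K * (E j / X j)
          ring
  have hfin : ∫⁻ x, (∑' j, ENNReal.ofReal (f j x ^ (1 / r))) ^ r ≤
      ENNReal.ofReal (C * (K * (q / (q - 1) * 3))) := by
    calc _ ≤ ∫⁻ x, ENNReal.ofReal C *
          ∑' j, ENNReal.ofReal (f j x ^ (1 - ε) * (K * E j) ^ ε) := by
          refine lintegral_mono fun x => hCmain (fun j => f j x) (fun j => K * E j)
            (fun j => hf0 j x) (fun j => ?_) (fun j => mul_pos hK0 (hE0 j)) fun j => ?_
          · exact (hfT j x).trans (mul_le_mul_of_nonneg_left (hTE j) hK0.le)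
          · have := mul_le_mul_of_nonneg_left (hEstep j) hK0.le
            linarith
      _ = ENNReal.ofReal C *
          ∑' j, ∫⁻ x, ENNReal.ofReal (f j x ^ (1 - ε) * (K * E j) ^ ε) := by
          rw [lintegral_const_mul' _ _ ENNReal.ofReal_ne_top, lintegral_tsum fun j => ?_]
          exact ((((hfmeas j).pow_const _).mul_const _).ennreal_ofReal).aemeasurable
      _ ≤ ENNReal.ofReal C * ENNReal.ofReal (K * (q / (q - 1) * 3)) := by
          refine mul_le_mul_right ((ENNReal.tsum_le_tsum hIE).trans ?_) _
          refine ENNReal.tsum_le_of_sum_range_le fun N => ?_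
          rw [← ENNReal.ofReal_sum_of_nonneg fun j _ =>
            mul_nonneg hK0.le (div_nonneg (hE0 j).le (by positivity)), ← Finset.mul_sum]
          exact ENNReal.ofReal_le_ofReal (mul_le_mul_of_nonneg_left (hEsum N) hK0.le)
      _ = _ := (ENNReal.ofReal_mul hC.le).symm
  calc _ ≤ (ENNReal.ofReal (C * (K * (q / (q - 1) * 3)))) ^ (1 / r) :=
        ENNReal.rpow_le_rpow hfin (by positivity)
    _ = _ := ENNReal.ofReal_rpow_of_nonneg hD.le (by positivity)

end
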